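/- Let G be a context-free grammar in Chomsky normal form with T nonterminals over a finite alphabet Σ, and let M be a safety NFA over Σ with state set Q of size n (every state of M is accepting) in which every state is reachable from the set of initial states. Let B = (2^{T+1} − 2)·n + 2^T. Then the following conditions are equivalent: (i) ed(L(G), M.accepts) = ⊤ (the edit distance is infinite); (ii) ed(L(G), M.accepts) > B; (iii) there exists a word w ∈ L(G) together with a compact G-decomposition w = s₁u₁⋯s_k u_k s_{k+1} such that the nested reachability set R(u_k, R(u_{k−1}, …, R(u₁, Q)…)) is empty. -/

import Mathlib

namespace Levenshtein

/-- A cost structure for Levenshtein edit distance. -/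
structure Cost (α β δ : Type*) where
  /-- Cost to delete an element from a list. -/
  delete : α → δ
  /-- Cost to insert an element into a list. -/
  insert : β → δ
  /-- Cost to substitute one element for another in a list. -/
  substitute : α → β → δ

/-- The default cost structure, for which all operations cost `1`. -/
def defaultCost {α : Type*} [DecidableEq α] : Cost α α ℕ where
  delete _ := 1
  insert _ := 1
  substitute a b := if a = b then 0 else 1

/-- (Implementation detail for `levenshtein`) -/
def impl {α β δ : Type*} [AddZeroClass δ] [Min δ] (C : Cost α β δ)
    (xs : List α) (y : β) (d : {r : List δ // 0 < r.length}) : {r : List δ // 0 < r.length} :=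
  let ⟨ds, w⟩ := d
  xs.zip (ds.zip ds.tail) |>.foldr
    (init := ⟨[C.insert y + ds.getLast (List.length_pos_iff.mp w)], by simp⟩)
    (fun ⟨x, d₀, d₁⟩ ⟨r, w⟩ =>
      ⟨min (C.delete x + r[0]) (min (C.insert y + d₀) (C.substitute x y + d₁)) :: r, by simp⟩)

end Levenshtein

/-- `suffixLevenshtein C xs ys` computes the Levenshtein distance
(using the cost functions provided by a `C : Cost α β δ`)
from each suffix of the list `xs` to the list `ys`. -/
def suffixLevenshtein {α β δ : Type*} [AddZeroClass δ] [Min δ] (C : Levenshtein.Cost α β δ)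
    (xs : List α) (ys : List β) : {r : List δ // 0 < r.length} :=
  ys.foldr
    (Levenshtein.impl C xs)
    (xs.foldr (init := ⟨[0], by simp⟩) (fun a ⟨r, w⟩ => ⟨(C.delete a + r[0]) :: r, by simp⟩))

/-- `levenshtein C xs ys` computes the Levenshtein distance
(using the cost functions provided by a `C : Cost α β δ`)
from the list `xs` to the list `ys`. -/
def levenshtein {α β δ : Type*} [AddZeroClass δ] [Min δ] (C : Levenshtein.Cost α β δ)
    (xs : List α) (ys : List β) : δ :=
  let ⟨r, w⟩ := suffixLevenshtein C xs ys
  r[0]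

/-- Context-free grammar that generates words over the alphabet `T` (a type of terminals),
with nonterminals in an arbitrary universe. -/
structure ContextFreeGrammarU.{uN, uT} (T : Type uT) where
  /-- Type of nonterminals. -/
  NT : Type uN
  /-- Initial nonterminal. -/
  initial : NT
  /-- Rewrite rules. -/
  rules : Finset (ContextFreeRule T NT)

/-- One step of context-free transformation. -/
def ContextFreeGrammarU.Produces {T : Type*} (g : ContextFreeGrammarU T)
    (u v : List (Symbol T g.NT)) : Prop :=
  ∃ r ∈ g.rules, r.Rewrites u v

/-- Any number of steps of context-free transformation. -/
abbrev ContextFreeGrammarU.Derives {T : Type*} (g : ContextFreeGrammarU T) :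
    List (Symbol T g.NT) → List (Symbol T g.NT) → Prop :=
  Relation.ReflTransGen g.Produces

/-- `g.Generates s` means that `g` can transform its initial nonterminal to `s`. -/
def ContextFreeGrammarU.Generates {T : Type*} (g : ContextFreeGrammarU T)
    (s : List (Symbol T g.NT)) : Prop :=
  g.Derives [Symbol.nonterminal g.initial] s

/-- The language (set of words) that can be generated by a given context-free grammar `g`. -/
def ContextFreeGrammarU.language {T : Type*} (g : ContextFreeGrammarU T) : Language T :=
  { w : List T | g.Generates (w.map Symbol.terminal) }

/-- Levenshtein edit distance between two words. -/
def ed {α : Type*} [DecidableEq α] (w₁ w₂ : List α) : ℕ :=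
  levenshtein Levenshtein.defaultCost w₁ w₂

/-- Edit distance from a word to a language, valued in `ℕ∞`. -/
noncomputable def edWordLang {α : Type*} [DecidableEq α] (w : List α) (L : Language α) : ℕ∞ :=
  ⨅ w' ∈ L, (ed w w' : ℕ∞)

/-- Edit distance from language `L₁` to language `L₂`, valued in `ℕ∞`. -/
noncomputable def edLang {α : Type*} [DecidableEq α] (L₁ L₂ : Language α) : ℕ∞ :=
  ⨆ w ∈ L₁, edWordLang w L₂

/-- `u ^ ℓ` : concatenation of `ℓ` copies of `u`. -/
def wpow {α : Type*} (u : List α) (ℓ : ℕ) : List α := (List.replicate ℓ u).flatten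

/-- The interleaved concatenation `s₁u₁s₂u₂⋯s_k u_k s_{k+1}` where
`ss = [s₁, …, s_{k+1}]` and `us = [u₁, …, u_k]`. -/
def weave {α : Type*} (ss us : List (List α)) : List α :=
  (List.zipWith (· ++ ·) ss us).flatten ++ (ss.drop us.length).flatten

/-- A context-free grammar is in Chomsky normal form. -/
def ContextFreeGrammarU.IsCNF {α : Type*} (G : ContextFreeGrammarU α) : Prop :=
  ∀ r ∈ G.rules,
    (∃ z u : G.NT, r.output = [Symbol.nonterminal z, Symbol.nonterminal u]) ∨
    (∃ a : α, r.output = [Symbol.terminal a]) ∨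
    (r.input = G.initial ∧ r.output = [])

/-- Compact `G`-decomposition of the word `w`. -/
def IsCompactDecomp {α : Type*} (G : ContextFreeGrammarU α) [Fintype G.NT]
    (w : List α) (ss us : List (List α)) : Prop :=
  ss.length = us.length + 1 ∧ w = weave ss us ∧
  (∀ ℓ : ℕ, weave ss (us.map (fun u => wpow u ℓ)) ∈ G.language) ∧
  (ss.map List.length).sum ≤ 2 ^ Fintype.card G.NT ∧
  us.length ≤ 2 ^ (Fintype.card G.NT + 1) - 2

/-- The reachability set `R(u, S')`: states reachable (by any word) from the set of states
reachable from `S'` upon reading `u`. -/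
def reachSet {α σ : Type*} (M : NFA α σ) (u : List α) (S' : Set σ) : Set σ :=
  { q | ∃ v : List α, q ∈ M.evalFrom (M.evalFrom S' u) v }

/-- Prefix closure of a language. -/
def prefLang {α : Type*} (L : Language α) : Language α := { u | ∃ v, u ++ v ∈ L }

/-! ### Levenshtein recursion -/

section Lev
variable {α : Type*} [DecidableEq α]

theorem lev_impl_cons {α β δ : Type*} [AddZeroClass δ] [Min δ] (C : Levenshtein.Cost α β δ)
    (x : α) (xs : List α) (y : β) (d : δ) (ds : List δ) (w : 0 < (d :: ds).length)
    (w' : 0 < ds.length) :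
    (Levenshtein.impl C (x :: xs) y ⟨d :: ds, w⟩).1 =
      min (C.delete x + (Levenshtein.impl C xs y ⟨ds, w'⟩).1[0]'(Levenshtein.impl C xs y ⟨ds, w'⟩).2)
        (min (C.insert y + d) (C.substitute x y + ds[0])) ::
        (Levenshtein.impl C xs y ⟨ds, w'⟩).1 :=
  match ds, w' with
  | _ :: _, _ => rfl

theorem lev_def {α β δ : Type*} [AddZeroClass δ] [Min δ] (C : Levenshtein.Cost α β δ)
    (xs : List α) (ys : List β) : levenshtein C xs ys =
      (suffixLevenshtein C xs ys).1[0]'(suffixLevenshtein C xs ys).2 := rfl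

theorem lev_suffix {α β δ : Type*} [AddZeroClass δ] [Min δ] (C : Levenshtein.Cost α β δ)
    (x : α) (xs : List α) (ys : List β) :
    (suffixLevenshtein C (x :: xs) ys).1 =
      levenshtein C (x :: xs) ys :: (suffixLevenshtein C xs ys).1 := by
  induction ys with
  | nil => rfl
  | cons y ys ih =>
    have h1 : suffixLevenshtein C (x :: xs) (y :: ys) =
      Levenshtein.impl C (x :: xs) y ⟨levenshtein C (x :: xs) ys ::
        (suffixLevenshtein C xs ys).1, by simp⟩ := by
      change Levenshtein.impl C (x :: xs) y (suffixLevenshtein C (x :: xs) ys) = _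
      congr 1
      exact Subtype.ext ih
    rw [lev_def]
    simp only [h1]
    simp only [lev_impl_cons C x xs y _ _ _ (suffixLevenshtein C xs ys).2]
    rfl

theorem lev_cons_cons {α β δ : Type*} [AddZeroClass δ] [Min δ] (C : Levenshtein.Cost α β δ)
    (x : α) (xs : List α) (y : β) (ys : List β) :
    levenshtein C (x :: xs) (y :: ys) =
      min (C.delete x + levenshtein C xs (y :: ys))
        (min (C.insert y + levenshtein C (x :: xs) ys)
          (C.substitute x y + levenshtein C xs ys)) := by
  have h1 : suffixLevenshtein C (x :: xs) (y :: ys) =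
      Levenshtein.impl C (x :: xs) y ⟨levenshtein C (x :: xs) ys ::
        (suffixLevenshtein C xs ys).1, by simp⟩ := by
      change Levenshtein.impl C (x :: xs) y (suffixLevenshtein C (x :: xs) ys) = _
      congr 1
      exact Subtype.ext (lev_suffix C x xs ys)
  rw [lev_def]
  simp only [h1]
  simp only [lev_impl_cons C x xs y _ _ _ (suffixLevenshtein C xs ys).2]
  rfl

theorem ed_nil_nil : ed ([] : List α) [] = 0 := rfl

theorem ed_cons_nil (x : α) (xs : List α) : ed (x :: xs) [] = 1 + ed xs [] := rfl

theorem ed_nil_cons (y : α) (ys : List α) : ed [] (y :: ys) = 1 + ed [] ys := by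
  have h : ∀ d : {r : List ℕ // 0 < r.length}, d.1.length = 1 →
      (Levenshtein.impl (Levenshtein.defaultCost (α := α)) [] y d).1 = [1 + d.1[0]'d.2] := by
    rintro ⟨d, hd⟩ hl
    obtain ⟨a, rfl⟩ := List.length_eq_one_iff.1 hl
    rfl
  have hlen : ∀ zs : List α,
      (suffixLevenshtein (Levenshtein.defaultCost (α := α)) [] zs).1.length = 1 := by
    intro zs
    induction zs with
    | nil => rfl
    | cons z zs _ => rfl
  have h2 := h _ (hlen ys)
  change (Levenshtein.impl (Levenshtein.defaultCost (α := α)) [] y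
    (suffixLevenshtein (Levenshtein.defaultCost (α := α)) [] ys)).1[0]'_ = _
  simp only [h2]
  rfl

theorem ed_cons_cons (x : α) (xs : List α) (y : α) (ys : List α) :
    ed (x :: xs) (y :: ys) = min (1 + ed xs (y :: ys))
      (min (1 + ed (x :: xs) ys) ((if x = y then 0 else 1) + ed xs ys)) :=
  lev_cons_cons _ _ _ _ _

/-- Alignments with a cost. -/
inductive EdA : List α → List α → ℕ → Prop
  | nil : EdA [] [] 0
  | del (x : α) {xs ys : List α} {n : ℕ} : EdA xs ys n → EdA (x :: xs) ys (1 + n)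
  | ins (y : α) {xs ys : List α} {n : ℕ} : EdA xs ys n → EdA xs (y :: ys) (1 + n)
  | sub (x y : α) {xs ys : List α} {n : ℕ} : EdA xs ys n →
      EdA (x :: xs) (y :: ys) ((if x = y then 0 else 1) + n)

theorem EdA.of_ed : ∀ (xs ys : List α), EdA xs ys (ed xs ys)
  | [], [] => EdA.nil
  | x :: xs, [] => by
    rw [ed_cons_nil]; exact EdA.del x (EdA.of_ed xs [])
  | [], y :: ys => by
    rw [ed_nil_cons]; exact EdA.ins y (EdA.of_ed [] ys)
  | x :: xs, y :: ys => by
    have h1 := EdA.del x (EdA.of_ed xs (y :: ys))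
    have h2 := EdA.ins y (EdA.of_ed (x :: xs) ys)
    have h3 := EdA.sub x y (EdA.of_ed xs ys)
    rw [ed_cons_cons]
    rcases min_choice (1 + ed xs (y :: ys))
      (min (1 + ed (x :: xs) ys) ((if x = y then 0 else 1) + ed xs ys)) with h | h
    · rw [h]; exact h1
    · rw [h]
      rcases min_choice (1 + ed (x :: xs) ys) ((if x = y then 0 else 1) + ed xs ys) with h | h
      · rw [h]; exact h2
      · rw [h]; exact h3
termination_by xs ys => xs.length + ys.length

theorem EdA.le {xs ys : List α} {n : ℕ} (h : EdA xs ys n) : ed xs ys ≤ n := by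
  induction h with
  | nil => exact le_of_eq ed_nil_nil
  | @del x xs ys n h ih =>
    cases ys with
    | nil => rw [ed_cons_nil]; omega
    | cons y ys => rw [ed_cons_cons]; exact (min_le_left _ _).trans (by omega)
  | @ins y xs ys n h ih =>
    cases xs with
    | nil => rw [ed_nil_cons]; omega
    | cons x xs =>
      rw [ed_cons_cons]
      exact (min_le_right _ _).trans ((min_le_left _ _).trans (by omega))
  | @sub x y xs ys n h ih =>
    rw [ed_cons_cons]
    exact (min_le_right _ _).trans ((min_le_right _ _).trans (by omega))

theorem EdA.refl (xs : List α) : EdA xs xs 0 := by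
  induction xs with
  | nil => exact EdA.nil
  | cons x xs ih => simpa using EdA.sub x x ih

theorem EdA.append {a b c d : List α} {n m : ℕ} (h : EdA a c n) (h' : EdA b d m) :
    EdA (a ++ b) (c ++ d) (n + m) := by
  induction h with
  | nil => simpa using h'
  | del x _ ih => rw [add_assoc]; exact EdA.del x ih
  | ins y _ ih => rw [add_assoc]; exact EdA.ins y ih
  | sub x y _ ih => rw [add_assoc]; exact EdA.sub x y ih

theorem EdA.nil_right (a : List α) : EdA a [] a.length := by
  induction a with
  | nil => exact EdA.nil
  | cons x xs ih => rw [List.length_cons, add_comm]; exact EdA.del x ih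

theorem EdA.nil_left (a : List α) : EdA [] a a.length := by
  induction a with
  | nil => exact EdA.nil
  | cons x xs ih => rw [List.length_cons, add_comm]; exact EdA.ins x ih

theorem EdA.trivial (a b : List α) : EdA a b (a.length + b.length) := by
  simpa using (EdA.nil_right a).append (EdA.nil_left b)

theorem EdA.eq_of_zero {a b : List α} {n : ℕ} (h : EdA a b n) (hn : n = 0) : a = b := by
  induction h with
  | nil => rfl
  | del x _ ih => omega
  | ins y _ ih => omega
  | sub x y _ ih =>
    split_ifs at hn with hxy
    · rw [hxy, ih (by omega)]
    · omega

theorem EdA.split {x y : List α} {n : ℕ} (h : EdA x y n) : ∀ a b : List α, x = a ++ b →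
    ∃ c d : List α, ∃ i j : ℕ, y = c ++ d ∧ EdA a c i ∧ EdA b d j ∧ i + j = n := by
  induction h with
  | nil =>
    intro a b h
    obtain ⟨rfl, rfl⟩ := List.append_eq_nil_iff.1 h.symm
    exact ⟨[], [], 0, 0, rfl, EdA.nil, EdA.nil, rfl⟩
  | @del x xs ys n h ih =>
    intro a b hab
    cases a with
    | nil =>
      simp only [List.nil_append] at hab
      subst hab
      exact ⟨[], ys, 0, 1 + n, rfl, EdA.nil, EdA.del x h, by omega⟩
    | cons a0 a =>
      simp only [List.cons_append, List.cons.injEq] at hab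
      obtain ⟨rfl, rfl⟩ := hab
      obtain ⟨c, d, i, j, rfl, h1, h2, rfl⟩ := ih a b rfl
      exact ⟨c, d, 1 + i, j, rfl, EdA.del x h1, h2, by omega⟩
  | @ins y xs ys n h ih =>
    intro a b hab
    obtain ⟨c, d, i, j, rfl, h1, h2, rfl⟩ := ih a b hab
    exact ⟨y :: c, d, 1 + i, j, rfl, EdA.ins y h1, h2, by omega⟩
  | @sub x y xs ys n h ih =>
    intro a b hab
    cases a with
    | nil =>
      simp only [List.nil_append] at hab
      subst hab
      exact ⟨[], y :: ys, 0, _, rfl, EdA.nil, EdA.sub x y h, by omega⟩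
    | cons a0 a =>
      simp only [List.cons_append, List.cons.injEq] at hab
      obtain ⟨rfl, rfl⟩ := hab
      obtain ⟨c, d, i, j, rfl, h1, h2, rfl⟩ := ih a b rfl
      exact ⟨y :: c, d, _, j, rfl, EdA.sub x y h1, h2, by omega⟩

theorem wpow_zero' {α : Type*} (u : List α) : wpow u 0 = [] := rfl

theorem wpow_succ' {α : Type*} (u : List α) (ℓ : ℕ) : wpow u (ℓ + 1) = u ++ wpow u ℓ := by
  simp [wpow, List.replicate_succ]

theorem wpow_succ_right {α : Type*} (u : List α) (ℓ : ℕ) : wpow u (ℓ + 1) = wpow u ℓ ++ u := by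
  simp [wpow, List.replicate_succ']

theorem EdA.factor_of_wpow (u : List α) : ∀ (ℓ : ℕ) (y : List α) (n : ℕ),
    EdA (wpow u ℓ) y n → n < ℓ → ∃ a b, y = a ++ u ++ b := by
  intro ℓ
  induction ℓ with
  | zero => intro y n _ h; omega
  | succ ℓ ih =>
    intro y n h hn
    obtain ⟨c, d, i, j, rfl, h1, h2, rfl⟩ := h.split _ _ (wpow_succ' u ℓ)
    by_cases hi : i = 0
    · have := h1.eq_of_zero hi
      subst this
      exact ⟨[], d, by simp⟩
    · obtain ⟨a, b, rfl⟩ := ih d j h2 (by omega)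
      exact ⟨c ++ a, b, by simp⟩

theorem weave_cons {α : Type*} (s u : List α) (ss us : List (List α)) :
    weave (s :: ss) (u :: us) = s ++ (u ++ weave ss us) := by
  simp [weave]

theorem weave_nil {α : Type*} (s : List α) : weave [s] [] = s := by
  simp [weave]

end Lev

/-! ### NFA side -/

section NFASide
variable {α σ : Type*}

theorem evalFrom_mono' (M : NFA α σ) {S S' : Set σ} (h : S ⊆ S') (w : List α) :
    M.evalFrom S w ⊆ M.evalFrom S' w := by
  intro q hq
  rw [NFA.mem_evalFrom_iff_exists] at hq ⊢
  obtain ⟨p, hp, hq⟩ := hq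
  exact ⟨p, h hp, hq⟩

theorem nested_nonempty [DecidableEq α] (M : NFA α σ) (N ℓ : ℕ) (hN : N < ℓ) :
    ∀ (us ss : List (List α)) (S : Set σ) (y : List α) (n : ℕ), ss.length = us.length + 1 →
      (∀ v, M.evalFrom S v ⊆ S) → EdA (weave ss (us.map (fun u => wpow u ℓ))) y n → n ≤ N →
      (M.evalFrom S y).Nonempty → (us.foldl (fun S u => reachSet M u S) S).Nonempty := by
  intro us
  induction us with
  | nil =>
    intro ss S y n _ hcl _ _ hne
    exact hne.mono (hcl y)
  | cons u us ih =>
    intro ss S y n hlen hcl hE hn hne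
    obtain _ | ⟨s, ss⟩ := ss
    · simp at hlen
    rw [List.map_cons, weave_cons] at hE
    obtain ⟨y1, y', i1, j1, rfl, h1, h', rfl⟩ := hE.split _ _ rfl
    obtain ⟨y2, y3, i2, j2, rfl, h2, h3, rfl⟩ := h'.split _ _ rfl
    obtain ⟨a, b, rfl⟩ := EdA.factor_of_wpow u ℓ y2 i2 h2 (by omega)
    rw [List.foldl_cons]
    refine ih ss (reachSet M u S) y3 j2 (by simpa using hlen) ?_ h3 (by omega) ?_
    · rintro v q hq
      rw [NFA.mem_evalFrom_iff_exists] at hq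
      obtain ⟨p, ⟨v', hp⟩, hq⟩ := hq
      refine ⟨v' ++ v, ?_⟩
      rw [NFA.evalFrom_append, NFA.mem_evalFrom_iff_exists]
      exact ⟨p, hp, hq⟩
    · have e : y1 ++ (a ++ u ++ b ++ y3) = (y1 ++ a) ++ u ++ b ++ y3 := by simp
      rw [e, NFA.evalFrom_append] at hne
      refine hne.mono (evalFrom_mono' M ?_ _)
      intro q hq
      refine ⟨b, ?_⟩
      rw [NFA.evalFrom_append, NFA.evalFrom_append] at hq
      exact evalFrom_mono' M (evalFrom_mono' M (hcl _) _) _ hq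

theorem short_path [Fintype σ] (M : NFA α σ) (P : Set σ) (p : σ) :
    ∀ (n : ℕ) (v : List α), v.length ≤ n → p ∈ M.evalFrom P v →
      ∃ v' : List α, p ∈ M.evalFrom P v' ∧ v'.length ≤ Fintype.card σ := by
  intro n
  induction n with
  | zero => intro v hv hp; exact ⟨v, hp, by omega⟩
  | succ n ih =>
    intro v hv hp
    by_cases hc : v.length ≤ Fintype.card σ
    · exact ⟨v, hp, hc⟩
    have key : ∀ i : Fin (v.length + 1), ∃ q, q ∈ M.evalFrom P (v.take i) ∧
        p ∈ M.evalFrom {q} (v.drop i) := by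
      intro i
      rw [← List.take_append_drop i v, NFA.evalFrom_append, NFA.mem_evalFrom_iff_exists] at hp
      exact hp
    choose f hf1 hf2 using key
    obtain ⟨i, j, hij, hfe⟩ : ∃ i j : Fin (v.length + 1), i < j ∧ f i = f j := by
      obtain ⟨i, j, hne, hfe⟩ := Fintype.exists_ne_map_eq_of_card_lt f (by simp; omega)
      rcases lt_or_gt_of_ne hne with h | h
      · exact ⟨i, j, h, hfe⟩
      · exact ⟨j, i, h, hfe.symm⟩
    refine ih (v.take i ++ v.drop j) ?_ ?_
    · have := i.2
      have := j.2
      have : (i : ℕ) < j := hij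
      simp only [List.length_append, List.length_take, List.length_drop]
      omega
    · rw [NFA.evalFrom_append, NFA.mem_evalFrom_iff_exists]
      exact ⟨f i, hf1 i, hfe ▸ hf2 j⟩

theorem build_word [DecidableEq α] [Fintype σ] (M : NFA α σ) :
    ∀ (us : List (List α)) (S : Set σ),
      (us.foldl (fun S u => reachSet M u S) S).Nonempty →
      ∃ p ∈ S, ∀ (ss : List (List α)) (P : Set σ), ss.length = us.length + 1 →
        (∃ v, p ∈ M.evalFrom P v) →
        ∃ y, (M.evalFrom P y).Nonempty ∧
          ∃ n, EdA (weave ss us) y n ∧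
            n ≤ (ss.map List.length).sum + us.length * Fintype.card σ := by
  intro us
  induction us with
  | nil =>
    rintro S ⟨p, hp⟩
    refine ⟨p, hp, ?_⟩
    rintro ss P hlen ⟨v, hv⟩
    obtain ⟨s, rfl⟩ := List.length_eq_one_iff.1 hlen
    rw [NFA.mem_evalFrom_iff_exists] at hv
    obtain ⟨q, hq, -⟩ := hv
    refine ⟨[], ⟨q, by simpa using hq⟩, s.length, ?_, by simp⟩
    rw [weave_nil]
    exact EdA.nil_right s
  | cons u us ih =>
    intro S hne
    rw [List.foldl_cons] at hne
    obtain ⟨p', ⟨v', hp'⟩, H⟩ := ih _ hne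
    rw [NFA.mem_evalFrom_iff_exists] at hp'
    obtain ⟨q, hq, hqp⟩ := hp'
    rw [NFA.mem_evalFrom_iff_exists] at hq
    obtain ⟨p, hp, hpq⟩ := hq
    refine ⟨p, hp, ?_⟩
    rintro ss P hlen ⟨v, hv⟩
    obtain _ | ⟨s, ss⟩ := ss
    · simp at hlen
    obtain ⟨v0, hv0, hl0⟩ := short_path M P p _ v le_rfl hv
    have hqP : q ∈ M.evalFrom P (v0 ++ u) := by
      rw [NFA.evalFrom_append, NFA.mem_evalFrom_iff_exists]
      exact ⟨p, hv0, hpq⟩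
    obtain ⟨y, hy, n, hE, hn⟩ := H ss (M.evalFrom P (v0 ++ u)) (by simpa using hlen)
      ⟨v', by rw [NFA.mem_evalFrom_iff_exists]; exact ⟨q, hqP, hqp⟩⟩
    refine ⟨v0 ++ (u ++ y), ?_, (s.length + v0.length) + (0 + n), ?_, ?_⟩
    · rw [← List.append_assoc, NFA.evalFrom_append]; exact hy
    · rw [weave_cons]
      exact (EdA.trivial s v0).append ((EdA.refl u).append hE)
    · simp only [List.map_cons, List.sum_cons, List.length_cons]
      have : (us.length + 1) * Fintype.card σ = us.length * Fintype.card σ + Fintype.card σ := by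
        ring
      omega

end NFASide

/-! ### Grammar side -/

section Gram
variable {α : Type*}

/-- Parse trees (as a predicate) with nonterminals in `S`. -/
inductive PT (G : ContextFreeGrammarU α) (S : Set G.NT) : G.NT → List α → Prop
  | eps {A : G.NT} : A ∈ S → (⟨A, []⟩ : ContextFreeRule α G.NT) ∈ G.rules → PT G S A []
  | term {A : G.NT} {a : α} : A ∈ S →
      (⟨A, [Symbol.terminal a]⟩ : ContextFreeRule α G.NT) ∈ G.rules → PT G S A [a]
  | bin {A B C : G.NT} {x y : List α} : A ∈ S →
      (⟨A, [Symbol.nonterminal B, Symbol.nonterminal C]⟩ : ContextFreeRule α G.NT) ∈ G.rules →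
      PT G S B x → PT G S C y → PT G S A (x ++ y)

theorem PT.root {G : ContextFreeGrammarU α} {S : Set G.NT} {A : G.NT} {w : List α}
    (h : PT G S A w) : A ∈ S := by
  cases h <;> assumption

theorem PT.mono {G : ContextFreeGrammarU α} {S S' : Set G.NT} (hS : S ⊆ S') {A : G.NT}
    {w : List α} (h : PT G S A w) : PT G S' A w := by
  induction h with
  | eps h1 h2 => exact PT.eps (hS h1) h2
  | term h1 h2 => exact PT.term (hS h1) h2
  | bin h1 h2 _ _ i1 i2 => exact PT.bin (hS h1) h2 i1 i2

theorem derives_append_right (G : ContextFreeGrammarU α) {u v : List (Symbol α G.NT)}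
    (h : G.Derives u v) (p : List (Symbol α G.NT)) : G.Derives (u ++ p) (v ++ p) := by
  induction h with
  | refl => exact Relation.ReflTransGen.refl
  | tail _ h2 ih =>
    obtain ⟨r, hr, hrw⟩ := h2
    exact ih.tail ⟨r, hr, hrw.append_right p⟩

theorem derives_append_left (G : ContextFreeGrammarU α) {u v : List (Symbol α G.NT)}
    (h : G.Derives u v) (p : List (Symbol α G.NT)) : G.Derives (p ++ u) (p ++ v) := by
  induction h with
  | refl => exact Relation.ReflTransGen.refl
  | tail _ h2 ih =>
    obtain ⟨r, hr, hrw⟩ := h2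
    exact ih.tail ⟨r, hr, hrw.append_left p⟩

theorem produces_rule (G : ContextFreeGrammarU α) {A : G.NT} {o : List (Symbol α G.NT)}
    (h : (⟨A, o⟩ : ContextFreeRule α G.NT) ∈ G.rules) :
    G.Produces [Symbol.nonterminal A] o := by
  refine ⟨_, h, ?_⟩
  rw [ContextFreeRule.rewrites_iff]
  exact ⟨[], [], by simp, by simp⟩

theorem PT.derives {G : ContextFreeGrammarU α} {S : Set G.NT} {A : G.NT} {w : List α}
    (h : PT G S A w) : G.Derives [Symbol.nonterminal A] (w.map Symbol.terminal) := by
  induction h with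
  | eps _ h => exact Relation.ReflTransGen.single (produces_rule G h)
  | term _ h => exact Relation.ReflTransGen.single (produces_rule G h)
  | @bin A B C x y _ h _ _ i1 i2 =>
    refine Relation.ReflTransGen.head (produces_rule G h) ?_
    rw [List.map_append]
    exact (derives_append_right G i1 [Symbol.nonterminal C]).trans
      (derives_append_left G i2 _)

/-- Yield of a sentential form. -/
def SY (G : ContextFreeGrammarU α) : List (Symbol α G.NT) → List α → Prop
  | [], w => w = []
  | Symbol.terminal a :: u, w => ∃ w', w = a :: w' ∧ SY G u w'
  | Symbol.nonterminal A :: u, w => ∃ x y, w = x ++ y ∧ PT G Set.univ A x ∧ SY G u y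

theorem SY_append (G : ContextFreeGrammarU α) : ∀ (u v : List (Symbol α G.NT)) (w : List α),
    SY G (u ++ v) w ↔ ∃ x y, w = x ++ y ∧ SY G u x ∧ SY G v y := by
  intro u
  induction u with
  | nil =>
    intro v w
    simp [SY]
  | cons s u ih =>
    intro v w
    cases s with
    | terminal a =>
      simp only [List.cons_append, SY, ih]
      constructor
      · rintro ⟨w', rfl, x, y, rfl, hx, hy⟩
        exact ⟨a :: x, y, rfl, ⟨x, rfl, hx⟩, hy⟩
      · rintro ⟨_, y, rfl, ⟨x, rfl, hx⟩, hy⟩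
        exact ⟨x ++ y, rfl, x, y, rfl, hx, hy⟩
    | nonterminal A =>
      simp only [List.cons_append, SY, ih]
      constructor
      · rintro ⟨p, _, rfl, hp, x, y, rfl, hx, hy⟩
        exact ⟨p ++ x, y, by simp, ⟨p, x, rfl, hp, hx⟩, hy⟩
      · rintro ⟨_, y, rfl, ⟨p, x, rfl, hp, hx⟩, hy⟩
        exact ⟨p, x ++ y, by simp, hp, x, y, rfl, hx, hy⟩

theorem SY_terminals (G : ContextFreeGrammarU α) : ∀ w : List α,
    SY G (w.map Symbol.terminal) w := by
  intro w
  induction w with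
  | nil => simp [SY]
  | cons a w ih => exact ⟨w, rfl, ih⟩

theorem SY_of_derives (G : ContextFreeGrammarU α) (hG : G.IsCNF) {u v : List (Symbol α G.NT)}
    {w : List α} (h : G.Derives u v) (hv : SY G v w) : SY G u w := by
  induction h with
  | refl => exact hv
  | tail _ h2 ih =>
    apply ih
    obtain ⟨r, hr, hrw⟩ := h2
    rw [ContextFreeRule.rewrites_iff] at hrw
    obtain ⟨p, q, rfl, rfl⟩ := hrw
    rw [SY_append] at hv
    obtain ⟨xy, z, rfl, hv, hz⟩ := hv
    rw [SY_append] at hv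
    obtain ⟨x, y, rfl, hx, hy⟩ := hv
    rw [SY_append]
    refine ⟨x ++ y, z, rfl, ?_, hz⟩
    rw [SY_append]
    refine ⟨x, y, rfl, hx, y, [], by simp, ?_, rfl⟩
    have hc := hG r hr
    obtain ⟨A, o⟩ := r
    simp only at hc hy ⊢
    rcases hc with ⟨B, C, rfl⟩ | ⟨a, rfl⟩ | ⟨-, rfl⟩
    · obtain ⟨y1, y2, rfl, h1, y3, y4, rfl, h3, rfl⟩ := hy
      rw [List.append_nil]
      exact PT.bin trivial hr h1 h3
    · obtain ⟨y1, rfl, rfl⟩ := hy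
      exact PT.term trivial hr
    · obtain rfl : y = [] := hy
      exact PT.eps trivial hr

theorem mem_language_iff (G : ContextFreeGrammarU α) (hG : G.IsCNF) (w : List α) :
    w ∈ G.language ↔ PT G Set.univ G.initial w := by
  constructor
  · intro h
    obtain ⟨x, y, rfl, hx, rfl⟩ := SY_of_derives G hG h (SY_terminals G w)
    simpa using hx
  · intro h
    exact h.derives

/-- Shape of a tree rooted at `A` with no other `A` below. -/
def LastPT (G : ContextFreeGrammarU α) (S : Set G.NT) (A : G.NT) (x : List α) : Prop :=
  (x = [] ∧ (⟨A, []⟩ : ContextFreeRule α G.NT) ∈ G.rules) ∨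
  (∃ a, x = [a] ∧ (⟨A, [Symbol.terminal a]⟩ : ContextFreeRule α G.NT) ∈ G.rules) ∨
  (∃ B C y z, x = y ++ z ∧
    (⟨A, [Symbol.nonterminal B, Symbol.nonterminal C]⟩ : ContextFreeRule α G.NT) ∈ G.rules ∧
    PT G (S \ {A}) B y ∧ PT G (S \ {A}) C z)

theorem PT.extract {G : ContextFreeGrammarU α} {S : Set G.NT} (A : G.NT) {B : G.NT} {w : List α}
    (h : PT G S B w) : PT G (S \ {A}) B w ∨
      ∃ u1 x u2, w = u1 ++ x ++ u2 ∧ LastPT G S A x ∧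
        ∀ x', PT G Set.univ A x' → PT G Set.univ B (u1 ++ x' ++ u2) := by
  induction h with
  | @eps B h1 h2 =>
    by_cases hBA : B = A
    · subst hBA
      exact Or.inr ⟨[], [], [], rfl, Or.inl ⟨rfl, h2⟩, by simp⟩
    · exact Or.inl (PT.eps ⟨h1, hBA⟩ h2)
  | @term B a h1 h2 =>
    by_cases hBA : B = A
    · subst hBA
      exact Or.inr ⟨[], [a], [], rfl, Or.inr (Or.inl ⟨a, rfl, h2⟩), by simp⟩
    · exact Or.inl (PT.term ⟨h1, hBA⟩ h2)
  | @bin B C D y z h1 h2 h3 h4 i1 i2 =>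
    rcases i1 with i1 | ⟨u1, x, u2, rfl, hL, hc⟩
    · rcases i2 with i2 | ⟨u1, x, u2, rfl, hL, hc⟩
      · by_cases hBA : B = A
        · subst hBA
          exact Or.inr ⟨[], y ++ z, [], by simp,
            Or.inr (Or.inr ⟨C, D, y, z, rfl, h2, i1, i2⟩), by simp⟩
        · exact Or.inl (PT.bin ⟨h1, hBA⟩ h2 i1 i2)
      · refine Or.inr ⟨y ++ u1, x, u2, by simp, hL, fun x' hx' => ?_⟩
        have := PT.bin (S := Set.univ) trivial h2 (h3.mono (Set.subset_univ _)) (hc x' hx')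
        simpa using this
    · refine Or.inr ⟨u1, x, u2 ++ z, by simp, hL, fun x' hx' => ?_⟩
      have := PT.bin (S := Set.univ) trivial h2 (hc x' hx') (h4.mono (Set.subset_univ _))
      simpa using this

/-- `w` decomposes with pumped words `F`. -/
def Dec (F : ℕ → List α) (w : List α) (c k : ℕ) : Prop :=
  ∃ ss us : List (List α), ss.length = us.length + 1 ∧ w = weave ss us ∧
    (∀ ℓ, weave ss (us.map (fun u => wpow u ℓ)) = F ℓ) ∧
    (ss.map List.length).sum ≤ c ∧ us.length ≤ k

theorem weave_head (e s : List α) (ss us : List (List α)) :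
    weave ((e ++ s) :: ss) us = e ++ weave (s :: ss) us := by
  cases us <;> simp [weave]

theorem merge_exists : ∀ (us1 ss1 ss2 us2 : List (List α)), ss1.length = us1.length + 1 →
    ss2.length = us2.length + 1 →
    ∃ ss : List (List α), ss.length = (us1 ++ us2).length + 1 ∧
      (ss.map List.length).sum = (ss1.map List.length).sum + (ss2.map List.length).sum ∧
      ∀ f : List α → List α, weave ss ((us1 ++ us2).map f) =
        weave ss1 (us1.map f) ++ weave ss2 (us2.map f) := by
  intro us1
  induction us1 with
  | nil =>
    intro ss1 ss2 us2 h1 h2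
    obtain ⟨e, rfl⟩ := List.length_eq_one_iff.1 h1
    obtain _ | ⟨s, ss2⟩ := ss2
    · simp at h2
    refine ⟨(e ++ s) :: ss2, by simpa using h2, by simp; omega, fun f => ?_⟩
    rw [List.nil_append, weave_head, List.map_nil, weave_nil]
  | cons u us1 ih =>
    intro ss1 ss2 us2 h1 h2
    obtain _ | ⟨s, ss1⟩ := ss1
    · simp at h1
    obtain ⟨ss, hl, hs, hw⟩ := ih ss1 ss2 us2 (by simpa using h1) h2
    refine ⟨s :: ss, by simp only [List.length_cons, List.cons_append, hl], ?_, fun f => ?_⟩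
    · simp only [List.map_cons, List.sum_cons, hs]; omega
    · simp only [List.cons_append, List.map_cons, weave_cons, hw, List.append_assoc]

theorem Dec.append {F F' : ℕ → List α} {w w' : List α} {c c' k k' : ℕ} (h : Dec F w c k)
    (h' : Dec F' w' c' k') : Dec (fun ℓ => F ℓ ++ F' ℓ) (w ++ w') (c + c') (k + k') := by
  obtain ⟨ss, us, h1, h2, h3, h4, h5⟩ := h
  obtain ⟨ss', us', h1', h2', h3', h4', h5'⟩ := h'
  obtain ⟨ss2, hl, hs, hw⟩ := merge_exists us ss ss' us' h1 h1'
  refine ⟨ss2, us ++ us', hl, ?_, fun ℓ => ?_, by omega, by simp; omega⟩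
  · have := hw id
    simp only [List.map_id] at this
    rw [this, h2, h2']
  · rw [hw, h3, h3']

theorem Dec.const (w : List α) : Dec (fun _ => w) w w.length 0 :=
  ⟨[w], [], rfl, (weave_nil w).symm, fun _ => weave_nil w, by simp, by simp⟩

theorem Dec.pow (u : List α) : Dec (fun ℓ => wpow u ℓ) u 0 1 :=
  ⟨[[], []], [u], rfl, by simp [weave], fun ℓ => by simp [weave], by simp, by simp⟩

theorem Dec.weaken {F : ℕ → List α} {w : List α} {c c' k k' : ℕ} (h : Dec F w c k)
    (hc : c ≤ c') (hk : k ≤ k') : Dec F w c' k' := by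
  obtain ⟨ss, us, h1, h2, h3, h4, h5⟩ := h
  exact ⟨ss, us, h1, h2, h3, h4.trans hc, h5.trans hk⟩

theorem PT.pump {G : ContextFreeGrammarU α} {A : G.NT} {u1 u2 : List α}
    (h : ∀ x', PT G Set.univ A x' → PT G Set.univ A (u1 ++ x' ++ u2)) (x : List α)
    (hx : PT G Set.univ A x) (ℓ : ℕ) :
    PT G Set.univ A (wpow u1 ℓ ++ (x ++ wpow u2 ℓ)) := by
  induction ℓ with
  | zero => simpa [wpow_zero'] using hx
  | succ ℓ ih =>
    rw [wpow_succ', wpow_succ_right]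
    simpa using h _ ih

theorem PT.dec {G : ContextFreeGrammarU α} : ∀ (n : ℕ) (S : Set G.NT), S.Finite → S.ncard ≤ n →
    ∀ (A : G.NT) (w : List α), PT G S A w →
      ∃ F : ℕ → List α, Dec F w (2 ^ n) (2 ^ (n + 1) - 2) ∧ ∀ ℓ, PT G Set.univ A (F ℓ) := by
  intro n
  induction n with
  | zero =>
    intro S hS hn A w h
    have := (Set.ncard_eq_zero hS).1 (by omega)
    have := h.root
    simp_all
  | succ n ih =>
    intro S hS hn A w h
    rcases h.extract A with h' | ⟨u1, x, u2, rfl, hL, hc⟩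
    · exact absurd h'.root (by simp)
    obtain ⟨F, hF, hFA⟩ : ∃ F : ℕ → List α, Dec F x (2 ^ (n + 1)) (2 ^ (n + 2) - 4) ∧
        ∀ ℓ, PT G Set.univ A (F ℓ) := by
      have hpos : 0 < 2 ^ (n + 1) := by positivity
      rcases hL with ⟨rfl, hr⟩ | ⟨a, rfl, hr⟩ | ⟨B, C, y, z, rfl, hr, hy, hz⟩
      · exact ⟨_, (Dec.const []).weaken (by simp) (by omega), fun _ => PT.eps trivial hr⟩
      · exact ⟨_, (Dec.const [a]).weaken hpos (by omega),
          fun _ => PT.term trivial hr⟩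
      · have hcard : (S \ {A}).ncard ≤ n := by
          have := Set.ncard_sdiff_singleton_lt_of_mem h.root hS
          omega
        obtain ⟨F1, d1, p1⟩ := ih _ (hS.subset Set.sdiff_subset) hcard B y hy
        obtain ⟨F2, d2, p2⟩ := ih _ (hS.subset Set.sdiff_subset) hcard C z hz
        refine ⟨_, (d1.append d2).weaken (by rw [pow_succ]; omega) ?_,
          fun ℓ => PT.bin trivial hr (p1 ℓ) (p2 ℓ)⟩
        have : 2 ^ (n + 2) = 2 ^ (n + 1) * 2 := pow_succ _ _
        omega
    have d := (Dec.pow u1).append (hF.append (Dec.pow u2))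
    rw [← List.append_assoc] at d
    refine ⟨_, d.weaken (by omega) ?_, fun ℓ => PT.pump hc _ (hFA ℓ) ℓ⟩
    have : 2 ^ (n + 1 + 1) = 4 * 2 ^ n := by ring
    have : 2 ^ (n + 2) = 4 * 2 ^ n := by ring
    have : 0 < 2 ^ n := by positivity
    omega

theorem exists_compact (G : ContextFreeGrammarU α) [Fintype G.NT] (hG : G.IsCNF) (w : List α)
    (hw : w ∈ G.language) : ∃ ss us, IsCompactDecomp G w ss us := by
  rw [mem_language_iff G hG] at hw
  obtain ⟨F, ⟨ss, us, h1, h2, h3, h4, h5⟩, hF⟩ := PT.dec (Fintype.card G.NT) Set.univ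
    Set.finite_univ (by rw [Set.ncard_univ, Nat.card_eq_fintype_card]) _ _ hw
  refine ⟨ss, us, h1, h2, fun ℓ => ?_, h4, h5⟩
  rw [mem_language_iff G hG, h3]
  exact hF ℓ

end Gram

/-- Equivalent characterizations of infinite edit distance from a CNF grammar
to a safety NFA in which every state is reachable. -/
theorem edLang_infinite_iff_gt_bound_iff_nested_reach_empty {α σ : Type*}
    [Fintype α] [DecidableEq α] [Fintype σ]
    (G : ContextFreeGrammarU α) [Fintype G.NT] (hG : G.IsCNF)
    (M : NFA α σ) (hsafety : M.accept = Set.univ)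
    (hreach : ∀ q : σ, ∃ w : List α, q ∈ M.evalFrom M.start w) :
    (edLang G.language M.accepts = ⊤ ↔
      (((2 ^ (Fintype.card G.NT + 1) - 2) * Fintype.card σ + 2 ^ Fintype.card G.NT : ℕ) : ℕ∞)
        < edLang G.language M.accepts) ∧
    (edLang G.language M.accepts = ⊤ ↔
      ∃ w ∈ G.language, ∃ ss us : List (List α), IsCompactDecomp G w ss us ∧
        us.foldl (fun S u => reachSet M u S) Set.univ = ∅) := by
  set B : ℕ := (2 ^ (Fintype.card G.NT + 1) - 2) * Fintype.card σ + 2 ^ Fintype.card G.NT with hB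
  have h12 : edLang G.language M.accepts = ⊤ → (B : ℕ∞) < edLang G.language M.accepts := by
    intro h
    rw [h]
    exact ENat.natCast_lt_top B
  have h23 : (B : ℕ∞) < edLang G.language M.accepts →
      ∃ w ∈ G.language, ∃ ss us : List (List α), IsCompactDecomp G w ss us ∧
        us.foldl (fun S u => reachSet M u S) Set.univ = ∅ := by
    intro h
    by_contra hcon
    push Not at hcon
    refine absurd h (not_lt.2 ?_)
    refine iSup₂_le fun w hw => ?_
    obtain ⟨ss, us, hd⟩ := exists_compact G hG w hw
    obtain ⟨p, -, H⟩ := build_word M us Set.univ (hcon w hw ss us hd)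
    obtain ⟨h1, h2, h3, h4, h5⟩ := hd
    obtain ⟨y, ⟨q, hq⟩, n, hE, hn⟩ := H ss M.start h1 (hreach p)
    have hy : y ∈ M.accepts := by
      rw [NFA.mem_accepts]
      exact ⟨q, by simp [hsafety], hq⟩
    refine (iInf₂_le y hy).trans ?_
    rw [← h2] at hE
    have h6 := Nat.mul_le_mul_right (Fintype.card σ) h5
    have := hE.le
    exact_mod_cast (by omega : ed w y ≤ B)
  have h31 : (∃ w ∈ G.language, ∃ ss us : List (List α), IsCompactDecomp G w ss us ∧
        us.foldl (fun S u => reachSet M u S) Set.univ = ∅) →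
      edLang G.language M.accepts = ⊤ := by
    rintro ⟨w, hw, ss, us, ⟨h1, h2, h3, h4, h5⟩, hemp⟩
    rw [ENat.eq_top_iff_forall_ge]
    intro N
    refine le_trans ?_ (le_iSup₂_of_le _ (h3 (N + 1)) le_rfl)
    refine le_iInf₂ fun y hy => ?_
    by_contra hlt
    have hlt' : ed (weave ss (us.map (fun u => wpow u (N + 1)))) y < N := by
      exact_mod_cast not_le.1 hlt
    rw [NFA.mem_accepts] at hy
    obtain ⟨q, -, hq⟩ := hy
    have := nested_nonempty M N (N + 1) (by omega) us ss Set.univ y _ h1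
      (fun _ => Set.subset_univ _) (EdA.of_ed _ _) hlt'.le
      ⟨q, evalFrom_mono' M (Set.subset_univ _) _ hq⟩
    rw [hemp] at this
    exact Set.not_nonempty_empty this
  exact ⟨⟨h12, fun h => h31 (h23 h)⟩, ⟨fun h => h23 (h12 h), h31⟩⟩
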